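/- There exists a constant C > 0, depending only on α and β, such that for every real Dirichlet quasimode datum (u, λ, f) on the stadium S with ‖u‖_{L²(S)} = 1, one has ‖f‖²_{L²(S)} + ∫_{∂S ∩ W} w |∂_N u|² dl ≥ C. -/

import Mathlib

open MeasureTheory Real Set Filter

noncomputable section

/-- Partial derivative in the first (x) variable. -/
def pdx (u : ℝ × ℝ → ℝ) (p : ℝ × ℝ) : ℝ := deriv (fun t => u (t, p.2)) p.1

/-- Partial derivative in the second (y) variable. -/
def pdy (u : ℝ × ℝ → ℝ) (p : ℝ × ℝ) : ℝ := deriv (fun t => u (p.1, t)) p.2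

/-- The positive Laplacian `Δu = -u_xx - u_yy`. -/
def lap (u : ℝ × ℝ → ℝ) (p : ℝ × ℝ) : ℝ := -(pdx (pdx u) p) - (pdy (pdy u) p)

/-- The central rectangle `R = [-α,α] × [-β,β]`. -/
def Rect (α β : ℝ) : Set (ℝ × ℝ) := Icc (-α) α ×ˢ Icc (-β) β

/-- The wings `W = W₊ ∪ W₋`, two half-discs of radius β centered at `(±α, 0)`. -/
def Wings (α β : ℝ) : Set (ℝ × ℝ) :=
  {p | (p.1 - α) ^ 2 + p.2 ^ 2 ≤ β ^ 2 ∧ α ≤ p.1} ∪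
  {p | (p.1 + α) ^ 2 + p.2 ^ 2 ≤ β ^ 2 ∧ p.1 ≤ -α}

/-- The Bunimovich stadium `S = R ∪ W`. -/
def Stadium (α β : ℝ) : Set (ℝ × ℝ) := Rect α β ∪ Wings α β

/-- The boundary `∂S`: two horizontal segments and two semicircles. -/
def StadiumBoundary (α β : ℝ) : Set (ℝ × ℝ) :=
  {p | |p.1| ≤ α ∧ (p.2 = β ∨ p.2 = -β)} ∪
  {p | (|p.1| - α) ^ 2 + p.2 ^ 2 = β ^ 2 ∧ α ≤ |p.1|}

/-- Boundary integral `∫_{∂S} g dl` of an integrand `g` depending on the boundary point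
and the outward unit normal at that point. -/
def bdryInt (α β : ℝ) (g : ℝ × ℝ → ℝ × ℝ → ℝ) : ℝ :=
  (∫ x in (-α)..α, (g (x, β) (0, 1) + g (x, -β) (0, -1))) +
  β * ∫ θ in (-(π / 2))..(π / 2),
    (g (α + β * cos θ, β * sin θ) (cos θ, sin θ) +
     g (-(α + β * cos θ), β * sin θ) (-cos θ, sin θ))

/-- Boundary integral `∫_{∂S ∩ W} g dl` over the two semicircles only. -/
def bdryIntW (α β : ℝ) (g : ℝ × ℝ → ℝ × ℝ → ℝ) : ℝ :=
  β * ∫ θ in (-(π / 2))..(π / 2),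
    (g (α + β * cos θ, β * sin θ) (cos θ, sin θ) +
     g (-(α + β * cos θ), β * sin θ) (-cos θ, sin θ))

/-- The normal derivative `∂_N u = n₁ ∂_x u + n₂ ∂_y u` at a boundary point `p`
with outward unit normal `n`. -/
def nderiv (u : ℝ × ℝ → ℝ) (p n : ℝ × ℝ) : ℝ := n.1 * pdx u p + n.2 * pdy u p

/-- A real Dirichlet quasimode datum `(u, λ, f)` on the stadium: `λ > 0`, `u` smooth on a
neighborhood of `S`, `u = 0` on `∂S`, and `(Δ - λ²) u = f` on `S`. -/
structure QMDatum (α β : ℝ) where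
  u : ℝ × ℝ → ℝ
  lam : ℝ
  f : ℝ × ℝ → ℝ
  lam_pos : 0 < lam
  smooth : ∃ V : Set (ℝ × ℝ), IsOpen V ∧ Stadium α β ⊆ V ∧ ContDiffOn ℝ (⊤ : ℕ∞) u V
  dirichlet : ∀ p ∈ StadiumBoundary α β, u p = 0
  eqn : ∀ p ∈ Stadium α β, lap u p - lam ^ 2 * u p = f p

/-!
Two integrations by parts with the multiplier `x` control `u` by its boundary flux on the wings.

*Poincaré.* Since `u = 0` on `∂S`, integrating `∂ₓ(x u²)` gives `∫ u² = -2 ∫ x u ∂ₓu`, hence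
`‖u‖² ≤ 4 L² ‖∂ₓu‖²`, where `L = α + β` bounds `|x|` on `S`.

*Rellich.* The commutator of `Δ` with `x ∂ₓ` is `-2 ∂ₓ²`, so testing `(Δ - λ²) u = f` with
`2 x ∂ₓu + u` eliminates `λ`:
`2 ‖∂ₓu‖² = ∫ f (u + 2 x ∂ₓu) + ∫_{∂S} x n₁ |∂_N u|² dl`.

The horizontal sides have `n₁ = 0`, and on the semicircles `x n₁ ≤ (L / β) w`, so the boundary term
is at most `(L / β) ∫_{∂S ∩ W} w |∂_N u|² dl`. Young's inequality absorbs the remaining terms.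
-/

section SliceIntegrals

variable {E : Type*} [NormedAddCommGroup E] [NormedSpace ℝ E] {S : Set (ℝ × ℝ)} {a b : ℝ}
  {c d : ℝ → ℝ} {g : ℝ × ℝ → E}

theorem setIntegral_eq_integral_vertical_slices (hab : a ≤ b) (hcd : ∀ x, c x ≤ d x)
    (hS : MeasurableSet S)
    (hmem : ∀ x y, (x, y) ∈ S ↔ x ∈ Icc a b ∧ y ∈ Icc (c x) (d x)) (hg : IntegrableOn g S) :
    ∫ p in S, g p = ∫ x in a..b, ∫ y in c x..d x, g (x, y) := by
  have hint : Integrable (S.indicator g) (volume.prod volume) := (integrable_indicator_iff hS).2 hg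
  have hslice (x y : ℝ) : S.indicator g (x, y) =
      (Icc a b).indicator (fun x => (Icc (c x) (d x)).indicator (fun y => g (x, y)) y) x := by
    by_cases hx : x ∈ Icc a b <;> simp only [indicator, hmem, hx, true_and, false_and, if_true,
      if_false]
  rw [← integral_indicator hS, Measure.volume_eq_prod, integral_prod _ hint,
    intervalIntegral.integral_of_le hab, ← integral_Icc_eq_integral_Ioc,
    ← integral_indicator measurableSet_Icc]
  congr 1 with x
  by_cases hx : x ∈ Icc a b
  · simp only [hslice, indicator_of_mem hx]
    rw [integral_indicator measurableSet_Icc, intervalIntegral.integral_of_le (hcd x),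
      integral_Icc_eq_integral_Ioc]
  · simp only [hslice, indicator_of_notMem hx, integral_zero]

theorem setIntegral_eq_integral_horizontal_slices (hab : a ≤ b) (hcd : ∀ y, c y ≤ d y)
    (hS : MeasurableSet S)
    (hmem : ∀ x y, (x, y) ∈ S ↔ y ∈ Icc a b ∧ x ∈ Icc (c y) (d y)) (hg : IntegrableOn g S) :
    ∫ p in S, g p = ∫ y in a..b, ∫ x in c y..d y, g (x, y) := by
  have hswap : MeasurePreserving (Prod.swap : ℝ × ℝ → ℝ × ℝ) := Measure.measurePreserving_swap
  have hemb : MeasurableEmbedding (Prod.swap : ℝ × ℝ → ℝ × ℝ) :=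
    MeasurableEquiv.prodComm.measurableEmbedding
  rw [← hswap.setIntegral_preimage_emb hemb]
  exact setIntegral_eq_integral_vertical_slices hab hcd (hS.preimage measurable_swap)
    (fun y x => hmem x y) ((hswap.integrableOn_comp_preimage hemb).2 hg)

end SliceIntegrals

section HalfCircle

variable {r : ℝ} {K : ℝ × ℝ → ℝ}

theorem sqrt_sq_sub_mul_sin_sq {θ : ℝ} (hr : 0 ≤ r) (hθ : 0 ≤ cos θ) :
    √(r ^ 2 - (r * sin θ) ^ 2) = r * cos θ := by
  rw [← Real.sqrt_sq (mul_nonneg hr hθ)]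
  congr 1
  linear_combination -r ^ 2 * sin_sq_add_cos_sq θ

theorem sqrt_sq_sub_mul_cos_sq (r θ : ℝ) : √(r ^ 2 - (r * cos θ) ^ 2) = |r * sin θ| := by
  rw [← Real.sqrt_sq_eq_abs]
  congr 1
  linear_combination -r ^ 2 * sin_sq_add_cos_sq θ

theorem integral_halfCircle_dy (hr : 0 ≤ r) (hK : Continuous K) :
    ∫ y in (-r)..r, K (√(r ^ 2 - y ^ 2), y) =
      r * ∫ θ in (-(π / 2))..(π / 2), cos θ * K (r * cos θ, r * sin θ) := by
  have hsubst := intervalIntegral.integral_comp_mul_deriv (a := -(π / 2)) (b := π / 2)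
    (f := fun θ => r * sin θ) (f' := fun θ => r * cos θ) (g := fun y => K (√(r ^ 2 - y ^ 2), y))
    (fun θ _ => (hasDerivAt_sin θ).const_mul r) (by fun_prop) (by fun_prop)
  simp only [sin_neg, sin_pi_div_two, mul_one, mul_neg] at hsubst
  rw [← hsubst, ← intervalIntegral.integral_const_mul]
  refine intervalIntegral.integral_congr fun θ hθ => ?_
  rw [uIcc_of_le (by linarith [pi_pos])] at hθ
  simp only [Function.comp_apply, sqrt_sq_sub_mul_sin_sq hr (cos_nonneg_of_mem_Icc hθ)]
  ring

theorem integral_halfCircle_dx (hr : 0 ≤ r) (hK : Continuous K) :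
    ∫ x in 0..r, (K (x, √(r ^ 2 - x ^ 2)) - K (x, -√(r ^ 2 - x ^ 2))) =
      r * ∫ θ in (-(π / 2))..(π / 2), sin θ * K (r * cos θ, r * sin θ) := by
  have hsubst {k : ℝ → ℝ} (hk : Continuous k) (s t : ℝ) :
      ∫ x in (r * cos s)..(r * cos t), k x = ∫ θ in s..t, k (r * cos θ) * (r * -sin θ) :=
    (intervalIntegral.integral_comp_mul_deriv (fun θ _ => (hasDerivAt_cos θ).const_mul r)
      (by fun_prop) hk).symm
  have hlower : ∫ x in 0..r, K (x, -√(r ^ 2 - x ^ 2)) =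
      ∫ θ in (-(π / 2))..0, -(r * (sin θ * K (r * cos θ, r * sin θ))) := by
    have h := hsubst (k := fun x => K (x, -√(r ^ 2 - x ^ 2))) (by fun_prop) (-(π / 2)) 0
    rw [cos_neg, cos_pi_div_two, cos_zero, mul_zero, mul_one] at h
    refine h.trans (intervalIntegral.integral_congr fun θ hθ => ?_)
    rw [uIcc_of_le (by linarith [pi_pos])] at hθ
    have hsin : sin θ ≤ 0 := sin_nonpos_of_nonpos_of_neg_pi_le hθ.2 (by linarith [hθ.1, pi_pos])
    simp only [sqrt_sq_sub_mul_cos_sq, abs_of_nonpos (mul_nonpos_of_nonneg_of_nonpos hr hsin),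
      neg_neg]
    ring
  have hupper : ∫ x in r..0, K (x, √(r ^ 2 - x ^ 2)) =
      ∫ θ in 0..(π / 2), -(r * (sin θ * K (r * cos θ, r * sin θ))) := by
    have h := hsubst (k := fun x => K (x, √(r ^ 2 - x ^ 2))) (by fun_prop) 0 (π / 2)
    rw [cos_pi_div_two, cos_zero, mul_zero, mul_one] at h
    refine h.trans (intervalIntegral.integral_congr fun θ hθ => ?_)
    rw [uIcc_of_le (by positivity)] at hθ
    have hsin : 0 ≤ sin θ := sin_nonneg_of_nonneg_of_le_pi hθ.1 (by linarith [hθ.2, pi_pos])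
    simp only [sqrt_sq_sub_mul_cos_sq, abs_of_nonneg (mul_nonneg hr hsin)]
    ring
  rw [intervalIntegral.integral_sub (Continuous.intervalIntegrable (by fun_prop) _ _)
    (Continuous.intervalIntegrable (by fun_prop) _ _), hlower, intervalIntegral.integral_symm,
    hupper, ← neg_add', add_comm, intervalIntegral.integral_add_adjacent_intervals
      (Continuous.intervalIntegrable (by fun_prop) _ _)
      (Continuous.intervalIntegrable (by fun_prop) _ _),
    intervalIntegral.integral_neg, neg_neg, intervalIntegral.integral_const_mul]

end HalfCircle

section PartialDerivatives

variable {u v : ℝ × ℝ → ℝ} {p : ℝ × ℝ} {n : WithTop ℕ∞}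

theorem hasDerivAt_comp_curve {a b : ℝ → ℝ} {a' b' t : ℝ}
    (hu : DifferentiableAt ℝ u (a t, b t)) (ha : HasDerivAt a a' t) (hb : HasDerivAt b b' t) :
    HasDerivAt (fun s => u (a s, b s)) (fderiv ℝ u (a t, b t) (a', b')) t :=
  hu.hasFDerivAt.comp_hasDerivAt t (ha.prodMk hb)

theorem pdx_eq_fderiv (hu : DifferentiableAt ℝ u p) : pdx u p = fderiv ℝ u p (1, 0) :=
  (hasDerivAt_comp_curve hu (hasDerivAt_id p.1) (hasDerivAt_const p.1 p.2)).deriv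

theorem pdy_eq_fderiv (hu : DifferentiableAt ℝ u p) : pdy u p = fderiv ℝ u p (0, 1) :=
  (hasDerivAt_comp_curve hu (hasDerivAt_const p.2 p.1) (hasDerivAt_id p.2)).deriv

theorem hasDerivAt_pdx (hu : DifferentiableAt ℝ u p) :
    HasDerivAt (fun t => u (t, p.2)) (pdx u p) p.1 :=
  pdx_eq_fderiv hu ▸ hasDerivAt_comp_curve hu (hasDerivAt_id p.1) (hasDerivAt_const p.1 p.2)

theorem hasDerivAt_pdy (hu : DifferentiableAt ℝ u p) :
    HasDerivAt (fun t => u (p.1, t)) (pdy u p) p.2 :=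
  pdy_eq_fderiv hu ▸ hasDerivAt_comp_curve hu (hasDerivAt_const p.2 p.1) (hasDerivAt_id p.2)

theorem fderiv_apply_eq_pdx_pdy (hu : DifferentiableAt ℝ u p) (a b : ℝ) :
    fderiv ℝ u p (a, b) = a * pdx u p + b * pdy u p := by
  have hab : ((a, b) : ℝ × ℝ) = a • (1, 0) + b • (0, 1) := by simp
  rw [hab, map_add, map_smul, map_smul, pdx_eq_fderiv hu, pdy_eq_fderiv hu, smul_eq_mul,
    smul_eq_mul]

theorem contDiff_pdx (hu : ContDiff ℝ (n + 1) u) : ContDiff ℝ n (pdx u) := by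
  have hpdx : pdx u = fun p => fderiv ℝ u p (1, 0) :=
    funext fun p => pdx_eq_fderiv (hu.differentiable (by simp) p)
  rw [hpdx]
  exact (hu.fderiv_right le_rfl).clm_apply contDiff_const

theorem contDiff_pdy (hu : ContDiff ℝ (n + 1) u) : ContDiff ℝ n (pdy u) := by
  have hpdy : pdy u = fun p => fderiv ℝ u p (0, 1) :=
    funext fun p => pdy_eq_fderiv (hu.differentiable (by simp) p)
  rw [hpdy]
  exact (hu.fderiv_right le_rfl).clm_apply contDiff_const

theorem continuous_pdx (hu : ContDiff ℝ 1 u) : Continuous (pdx u) :=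
  (contDiff_pdx (n := 0) (by simpa using hu)).continuous

theorem continuous_pdy (hu : ContDiff ℝ 1 u) : Continuous (pdy u) :=
  (contDiff_pdy (n := 0) (by simpa using hu)).continuous

theorem continuous_lap (hu : ContDiff ℝ 2 u) : Continuous (lap u) :=
  (continuous_pdx (contDiff_pdx hu)).neg.sub (continuous_pdy (contDiff_pdy hu))

theorem pdx_pdy_comm (hu : ContDiff ℝ 2 u) : pdx (pdy u) = pdy (pdx u) := by
  have hu1 : Differentiable ℝ u := hu.differentiable (by simp)
  have hu2 : Differentiable ℝ (fderiv ℝ u) :=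
    (hu.fderiv_right (m := 1) (by norm_num)).differentiable (by simp)
  have hfderiv (e e' p : ℝ × ℝ) :
      fderiv ℝ (fun q => fderiv ℝ u q e) p e' = fderiv ℝ (fderiv ℝ u) p e' e := by
    simp [fderiv_clm_apply (hu2 p) (differentiableAt_const e)]
  have hsymm (p : ℝ × ℝ) : IsSymmSndFDerivAt ℝ u p :=
    hu.contDiffAt.isSymmSndFDerivAt (by simp)
  have hpdx : pdx u = fun q => fderiv ℝ u q (1, 0) := funext fun q => pdx_eq_fderiv (hu1 q)
  have hpdy : pdy u = fun q => fderiv ℝ u q (0, 1) := funext fun q => pdy_eq_fderiv (hu1 q)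
  funext p
  rw [hpdx, hpdy, pdx_eq_fderiv (by fun_prop), pdy_eq_fderiv (by fun_prop), hfderiv, hfderiv]
  exact hsymm p _ _

open scoped Topology

theorem mul_pdx_add_mul_pdy_eq_zero {a b : ℝ → ℝ} {a' b' t c : ℝ}
    (hu : DifferentiableAt ℝ u (a t, b t)) (ha : HasDerivAt a a' t) (hb : HasDerivAt b b' t)
    (hconst : (fun s => u (a s, b s)) =ᶠ[𝓝 t] fun _ => c) :
    a' * pdx u (a t, b t) + b' * pdy u (a t, b t) = 0 := by
  rw [← fderiv_apply_eq_pdx_pdy hu, ← (hasDerivAt_comp_curve hu ha hb).deriv, hconst.deriv_eq,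
    deriv_const]

theorem pdx_congr_nhds (h : u =ᶠ[𝓝 p] v) : pdx u =ᶠ[𝓝 p] pdx v := by
  filter_upwards [h.eventuallyEq_nhds] with q hq
  exact (hq.comp_tendsto ((Continuous.prodMk_left q.2).tendsto q.1)).deriv_eq

theorem pdy_congr_nhds (h : u =ᶠ[𝓝 p] v) : pdy u =ᶠ[𝓝 p] pdy v := by
  filter_upwards [h.eventuallyEq_nhds] with q hq
  exact (hq.comp_tendsto ((Continuous.prodMk_right q.1).tendsto q.2)).deriv_eq

theorem lap_congr_nhds (h : u =ᶠ[𝓝 p] v) : lap u p = lap v p := by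
  rw [lap, lap, (pdx_congr_nhds (pdx_congr_nhds h)).eq_of_nhds,
    (pdy_congr_nhds (pdy_congr_nhds h)).eq_of_nhds]

theorem nderiv_congr_nhds (h : u =ᶠ[𝓝 p] v) (n : ℝ × ℝ) : nderiv u p n = nderiv v p n := by
  rw [nderiv, nderiv, (pdx_congr_nhds h).eq_of_nhds, (pdy_congr_nhds h).eq_of_nhds]

end PartialDerivatives

section Cutoff

open scoped Topology

theorem exists_contDiff_eventuallyEq_nhds {E F : Type*} [NormedAddCommGroup E] [NormedSpace ℝ E]
    [FiniteDimensional ℝ E] [NormedAddCommGroup F] [NormedSpace ℝ F] {n : ℕ∞} {u : E → F}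
    {S V : Set E} (hS : IsClosed S) (hV : IsOpen V) (hSV : S ⊆ V) (hu : ContDiffOn ℝ n u V) :
    ∃ v : E → F, ContDiff ℝ n v ∧ ∀ p ∈ S, v =ᶠ[𝓝 p] u := by
  obtain ⟨χ, hχ0, hχ1, -⟩ := exists_contMDiffMap_zero_one_nhds_of_isClosed (n := n)
    (modelWithCornersSelf ℝ E) hV.isClosed_compl hS (disjoint_compl_left_iff_subset.2 hSV)
  refine ⟨fun p => χ p • u p, contDiff_iff_contDiffAt.2 fun p => ?_, fun p hp => ?_⟩
  · by_cases hp : p ∈ V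
    · exact χ.contMDiff.contDiff.contDiffAt.smul (hu.contDiffAt (hV.mem_nhds hp))
    · refine (contDiffAt_const (c := (0 : F))).congr_of_eventuallyEq ?_
      filter_upwards [hχ0.filter_mono (nhds_le_nhdsSet hp)] with q hq
      rw [hq, zero_smul]
  · filter_upwards [hχ1.filter_mono (nhds_le_nhdsSet hp)] with q hq
    rw [hq, one_smul]

end Cutoff

section StadiumGeometry

variable {α β : ℝ} {p : ℝ × ℝ}

/-- The weight `w` of the paper, as a function of the abscissa: `|x| - α` on the wings and `0` on
the rectangle. Then `S = {w² + y² ≤ β²}` and `∂S = {w² + y² = β²}`. -/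
def wingWeight (α x : ℝ) : ℝ := max (|x| - α) 0

theorem wingWeight_nonneg (α x : ℝ) : 0 ≤ wingWeight α x := le_max_right _ _

theorem wingWeight_of_abs_le {x : ℝ} (hx : |x| ≤ α) : wingWeight α x = 0 :=
  max_eq_right (sub_nonpos.2 hx)

theorem wingWeight_of_le_abs {x : ℝ} (hx : α ≤ |x|) : wingWeight α x = |x| - α :=
  max_eq_left (sub_nonneg.2 hx)

theorem continuous_wingWeight (α : ℝ) : Continuous (wingWeight α) := by
  unfold wingWeight
  fun_prop

theorem mem_stadium_iff (hα : 0 ≤ α) (hβ : 0 ≤ β) :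
    p ∈ Stadium α β ↔ wingWeight α p.1 ^ 2 + p.2 ^ 2 ≤ β ^ 2 := by
  simp only [Stadium, Rect, Wings, mem_union, mem_prod, mem_Icc, mem_ofPred_eq, ← abs_le]
  rcases le_total |p.1| α with hx | hx
  · have hy : |p.2| ≤ β ↔ p.2 ^ 2 ≤ β ^ 2 := by rw [sq_le_sq, abs_of_nonneg hβ]
    rw [wingWeight_of_abs_le hx, hy]
    refine ⟨?_, fun h => Or.inl ⟨hx, by linarith⟩⟩
    rintro (⟨-, h⟩ | ⟨h, -⟩ | ⟨h, -⟩) <;> nlinarith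
  · rw [wingWeight_of_le_abs hx]
    constructor
    · rintro (⟨hx', hy⟩ | ⟨h, hx'⟩ | ⟨h, hx'⟩)
      · rw [le_antisymm hx' hx]
        nlinarith [sq_le_sq.2 (hy.trans (le_abs_self β))]
      · rwa [abs_of_nonneg (hα.trans hx')]
      · rw [abs_of_nonpos (by linarith)]
        linarith
    · intro h
      rcases abs_choice p.1 with hsign | hsign <;> rw [hsign] at h hx
      · exact Or.inr (Or.inl ⟨h, hx⟩)
      · exact Or.inr (Or.inr ⟨by linarith, by linarith⟩)

theorem mem_stadiumBoundary_iff :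
    p ∈ StadiumBoundary α β ↔ wingWeight α p.1 ^ 2 + p.2 ^ 2 = β ^ 2 := by
  simp only [StadiumBoundary, mem_union, mem_ofPred_eq, ← sq_eq_sq_iff_eq_or_eq_neg]
  rcases le_total |p.1| α with hx | hx
  · rw [wingWeight_of_abs_le hx]
    refine ⟨?_, fun h => Or.inl ⟨hx, by linarith⟩⟩
    rintro (⟨-, h⟩ | ⟨h, hx'⟩)
    · linarith
    · rwa [le_antisymm hx hx', sub_self] at h
  · rw [wingWeight_of_le_abs hx]
    refine ⟨?_, fun h => Or.inr ⟨h, hx⟩⟩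
    rintro (⟨hx', h⟩ | ⟨h, -⟩)
    · rw [le_antisymm hx' hx]
      linarith
    · exact h

theorem stadiumBoundary_subset_stadium (hα : 0 ≤ α) (hβ : 0 ≤ β) :
    StadiumBoundary α β ⊆ Stadium α β := fun _ hp =>
  (mem_stadium_iff hα hβ).2 (mem_stadiumBoundary_iff.1 hp).le

theorem mem_stadium_iff_vertical (hα : 0 ≤ α) (hβ : 0 ≤ β) (x y : ℝ) :
    (x, y) ∈ Stadium α β ↔ x ∈ Icc (-(α + β)) (α + β) ∧
      y ∈ Icc (-√(β ^ 2 - wingWeight α x ^ 2)) (√(β ^ 2 - wingWeight α x ^ 2)) := by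
  have hx : x ∈ Icc (-(α + β)) (α + β) ↔ 0 ≤ β ^ 2 - wingWeight α x ^ 2 := by
    rw [sub_nonneg, sq_le_sq₀ (wingWeight_nonneg α x) hβ, wingWeight, max_le_iff, mem_Icc, ← abs_le,
      sub_le_iff_le_add', and_iff_left hβ]
  rw [mem_stadium_iff hα hβ, hx, mem_Icc]
  refine ⟨fun h => ?_, fun ⟨hw, hy⟩ => ?_⟩
  · have hw : 0 ≤ β ^ 2 - wingWeight α x ^ 2 := by nlinarith
    exact ⟨hw, (Real.sq_le hw).1 (by linarith)⟩
  · linarith [(Real.sq_le hw).2 hy]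

theorem mem_stadium_iff_horizontal (hα : 0 ≤ α) (hβ : 0 ≤ β) (x y : ℝ) :
    (x, y) ∈ Stadium α β ↔ y ∈ Icc (-β) β ∧
      x ∈ Icc (-(α + √(β ^ 2 - y ^ 2))) (α + √(β ^ 2 - y ^ 2)) := by
  have hy : y ∈ Icc (-β) β ↔ 0 ≤ β ^ 2 - y ^ 2 := by
    rw [sub_nonneg, sq_le_sq, abs_of_nonneg hβ, mem_Icc, abs_le]
  have hx : x ∈ Icc (-(α + √(β ^ 2 - y ^ 2))) (α + √(β ^ 2 - y ^ 2)) ↔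
      wingWeight α x ≤ √(β ^ 2 - y ^ 2) := by
    rw [mem_Icc, ← abs_le, wingWeight, max_le_iff, sub_le_iff_le_add',
      and_iff_left (Real.sqrt_nonneg _)]
  rw [mem_stadium_iff hα hβ, hy, hx]
  refine ⟨fun h => ?_, fun ⟨hy, hw⟩ => ?_⟩
  · have hy : 0 ≤ β ^ 2 - y ^ 2 := by nlinarith
    exact ⟨hy, (Real.le_sqrt (wingWeight_nonneg α x) hy).2 (by linarith)⟩
  · linarith [(Real.le_sqrt (wingWeight_nonneg α x) hy).1 hw]

theorem fst_sq_le_of_mem_stadium (hα : 0 ≤ α) (hβ : 0 ≤ β) (hp : p ∈ Stadium α β) :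
    p.1 ^ 2 ≤ (α + β) ^ 2 :=
  have hx := ((mem_stadium_iff_vertical hα hβ p.1 p.2).1 hp).1
  sq_le_sq' hx.1 hx.2

theorem isCompact_stadium (hα : 0 ≤ α) (hβ : 0 ≤ β) : IsCompact (Stadium α β) := by
  have hclosed : IsClosed (Stadium α β) := by
    have hw := continuous_wingWeight α
    have hS : Stadium α β = {p | wingWeight α p.1 ^ 2 + p.2 ^ 2 ≤ β ^ 2} :=
      Set.ext fun _ => mem_stadium_iff hα hβ
    exact hS ▸ isClosed_le (by fun_prop) continuous_const
  have hbox : IsCompact (Icc (-(α + β)) (α + β) ×ˢ Icc (-β) β) := isCompact_Icc.prod isCompact_Icc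
  exact hbox.of_isClosed_subset hclosed fun p hp =>
    ⟨((mem_stadium_iff_vertical hα hβ p.1 p.2).1 hp).1,
    ((mem_stadium_iff_horizontal hα hβ p.1 p.2).1 hp).1⟩

theorem measurableSet_stadium (hα : 0 ≤ α) (hβ : 0 ≤ β) : MeasurableSet (Stadium α β) :=
  (isCompact_stadium hα hβ).isClosed.measurableSet

theorem integrableOn_stadium {g : ℝ × ℝ → ℝ} (hα : 0 ≤ α) (hβ : 0 ≤ β) (hg : Continuous g) :
    IntegrableOn g (Stadium α β) :=
  hg.continuousOn.integrableOn_compact (isCompact_stadium hα hβ)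

end StadiumGeometry

section DivergenceTheorem

variable {α β : ℝ} {F G : ℝ × ℝ → ℝ}

theorem wingWeight_neg (α x : ℝ) : wingWeight α (-x) = wingWeight α x := by
  rw [wingWeight, abs_neg, wingWeight]

theorem wingWeight_add {t : ℝ} (hα : 0 ≤ α) (ht : 0 ≤ t) : wingWeight α (α + t) = t := by
  rw [wingWeight, abs_of_nonneg (add_nonneg hα ht), add_sub_cancel_left, max_eq_left ht]

theorem integral_eq_integral_add_integral_tails {H : ℝ → ℝ} (hH : Continuous H) (a b : ℝ) :
    ∫ x in (-(a + b))..(a + b), H x =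
      (∫ x in (-a)..a, H x) + ∫ t in 0..b, (H (a + t) + H (-(a + t))) := by
  have hint (s t : ℝ) : IntervalIntegrable H volume s t := hH.intervalIntegrable s t
  have hright : ∫ t in 0..b, H (a + t) = ∫ x in a..(a + b), H x := by
    rw [intervalIntegral.integral_comp_add_left, add_zero]
  have hleft : ∫ t in 0..b, H (-(a + t)) = ∫ x in (-(a + b))..(-a), H x := by
    simp only [neg_add']
    rw [intervalIntegral.integral_comp_sub_left, sub_zero]
  rw [intervalIntegral.integral_add (Continuous.intervalIntegrable (by fun_prop) _ _)
    (Continuous.intervalIntegrable (by fun_prop) _ _), hright, hleft,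
    ← intervalIntegral.integral_add_adjacent_intervals (hint _ (-a)) (hint _ _),
    ← intervalIntegral.integral_add_adjacent_intervals (hint (-a) a) (hint _ _)]
  ring

theorem setIntegral_pdx_stadium (hα : 0 ≤ α) (hβ : 0 ≤ β) (hF : ContDiff ℝ 1 F) :
    ∫ p in Stadium α β, pdx F p = bdryInt α β (fun p n => n.1 * F p) := by
  have hF' : Continuous (pdx F) := continuous_pdx hF
  have hslice (y : ℝ) : ∫ x in (-(α + √(β ^ 2 - y ^ 2)))..(α + √(β ^ 2 - y ^ 2)), pdx F (x, y) =
      F (α + √(β ^ 2 - y ^ 2), y) - F (-(α + √(β ^ 2 - y ^ 2)), y) :=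
    intervalIntegral.integral_eq_sub_of_hasDerivAt (f := fun x => F (x, y))
      (fun x _ => hasDerivAt_pdx (p := (x, y)) (hF.differentiable one_ne_zero _))
      ((by fun_prop : Continuous fun x => pdx F (x, y)).intervalIntegrable _ _)
  rw [setIntegral_eq_integral_horizontal_slices (by linarith)
    (fun y => neg_le_self (by positivity)) (measurableSet_stadium hα hβ)
    (mem_stadium_iff_horizontal hα hβ) (integrableOn_stadium hα hβ hF')]
  simp only [hslice]
  rw [integral_halfCircle_dy (K := fun q => F (α + q.1, q.2) - F (-(α + q.1), q.2)) hβ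
    (by fun_prop)]
  simp only [bdryInt, zero_mul, add_zero, intervalIntegral.integral_zero, zero_add, neg_mul,
    mul_sub, ← sub_eq_add_neg]

theorem setIntegral_pdy_stadium (hα : 0 ≤ α) (hβ : 0 ≤ β) (hG : ContDiff ℝ 1 G) :
    ∫ p in Stadium α β, pdy G p = bdryInt α β (fun p n => n.2 * G p) := by
  have hG' : Continuous (pdy G) := continuous_pdy hG
  have hw := continuous_wingWeight α
  set Y : ℝ → ℝ := fun x => √(β ^ 2 - wingWeight α x ^ 2) with hY
  have hslice (x : ℝ) : ∫ y in (-Y x)..(Y x), pdy G (x, y) = G (x, Y x) - G (x, -Y x) :=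
    intervalIntegral.integral_eq_sub_of_hasDerivAt (f := fun y => G (x, y))
      (fun y _ => hasDerivAt_pdy (p := (x, y)) (hG.differentiable one_ne_zero _))
      ((by fun_prop : Continuous fun y => pdy G (x, y)).intervalIntegrable _ _)
  have hmiddle : ∫ x in (-α)..α, (G (x, Y x) - G (x, -Y x)) =
      ∫ x in (-α)..α, (G (x, β) - G (x, -β)) := by
    refine intervalIntegral.integral_congr fun x hx => ?_
    rw [uIcc_of_le (by linarith), mem_Icc, ← abs_le] at hx
    have hYx : Y x = β := by
      simp only [hY, wingWeight_of_abs_le hx, zero_pow two_ne_zero, sub_zero, Real.sqrt_sq hβ]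
    simp only [hYx]
  have htails : ∫ t in 0..β, (G (α + t, Y (α + t)) - G (α + t, -Y (α + t)) +
      (G (-(α + t), Y (-(α + t))) - G (-(α + t), -Y (-(α + t))))) =
      β * ∫ θ in (-(π / 2))..(π / 2), sin θ *
        (G (α + β * cos θ, β * sin θ) + G (-(α + β * cos θ), β * sin θ)) := by
    rw [← integral_halfCircle_dx (K := fun q => G (α + q.1, q.2) + G (-(α + q.1), q.2)) hβ
      (by fun_prop)]
    refine intervalIntegral.integral_congr fun t ht => ?_
    rw [uIcc_of_le hβ] at ht
    simp only [hY, wingWeight_neg, wingWeight_add hα ht.1]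
    ring
  rw [setIntegral_eq_integral_vertical_slices (c := fun x => -Y x) (d := Y) (by linarith)
    (fun x => neg_le_self (Real.sqrt_nonneg _)) (measurableSet_stadium hα hβ)
    (mem_stadium_iff_vertical hα hβ) (integrableOn_stadium hα hβ hG')]
  simp only [hslice]
  rw [integral_eq_integral_add_integral_tails (by fun_prop), hmiddle, htails]
  simp only [bdryInt, one_mul, neg_mul, mul_add, ← sub_eq_add_neg]

theorem continuous_bdryInt_segments (β : ℝ) {g : ℝ × ℝ → ℝ × ℝ → ℝ} (hg : Continuous g.uncurry) :
    Continuous fun x => g (x, β) (0, 1) + g (x, -β) (0, -1) :=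
  .add (hg.comp (f := fun x => ((x, β), (0, 1))) (by fun_prop))
    (hg.comp (f := fun x => ((x, -β), (0, -1))) (by fun_prop))

theorem continuous_bdryInt_arcs (α β : ℝ) {g : ℝ × ℝ → ℝ × ℝ → ℝ} (hg : Continuous g.uncurry) :
    Continuous fun θ => g (α + β * cos θ, β * sin θ) (cos θ, sin θ) +
      g (-(α + β * cos θ), β * sin θ) (-cos θ, sin θ) :=
  .add (hg.comp (f := fun θ => ((α + β * cos θ, β * sin θ), (cos θ, sin θ))) (by fun_prop))
    (hg.comp (f := fun θ => ((-(α + β * cos θ), β * sin θ), (-cos θ, sin θ))) (by fun_prop))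

theorem bdryInt_add {g h : ℝ × ℝ → ℝ × ℝ → ℝ} (hg : Continuous g.uncurry)
    (hh : Continuous h.uncurry) :
    bdryInt α β (fun p n => g p n + h p n) = bdryInt α β g + bdryInt α β h := by
  rw [bdryInt, bdryInt, bdryInt, add_add_add_comm, ← mul_add,
    ← intervalIntegral.integral_add
      ((continuous_bdryInt_segments β hg).intervalIntegrable _ _)
      ((continuous_bdryInt_segments β hh).intervalIntegrable _ _),
    ← intervalIntegral.integral_add
      ((continuous_bdryInt_arcs α β hg).intervalIntegrable _ _)
      ((continuous_bdryInt_arcs α β hh).intervalIntegrable _ _)]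
  exact congrArg₂ (· + ·) (intervalIntegral.integral_congr fun _ _ => add_add_add_comm ..)
    (congrArg (β * ·) (intervalIntegral.integral_congr fun _ _ => add_add_add_comm ..))

theorem setIntegral_divergence_stadium (hα : 0 ≤ α) (hβ : 0 ≤ β) (hF : ContDiff ℝ 1 F)
    (hG : ContDiff ℝ 1 G) :
    ∫ p in Stadium α β, (pdx F p + pdy G p) = bdryInt α β (fun p n => n.1 * F p + n.2 * G p) := by
  have hF' : Continuous (pdx F) := continuous_pdx hF
  have hG' : Continuous (pdy G) := continuous_pdy hG
  rw [integral_add (integrableOn_stadium hα hβ hF') (integrableOn_stadium hα hβ hG'),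
    setIntegral_pdx_stadium hα hβ hF, setIntegral_pdy_stadium hα hβ hG, bdryInt_add]
  all_goals unfold Function.uncurry; fun_prop

end DivergenceTheorem

section BoundaryNormals

variable {α β : ℝ} {p n : ℝ × ℝ}

/-- `n` is the outward unit normal to `∂S` at `p`. These are the pairs at which `bdryInt` evaluates
its integrand; the four junctions of segments and arcs are left out, which loses nothing under an
integral and makes both families of curves open. -/
inductive IsOutwardNormal (α β : ℝ) : ℝ × ℝ → ℝ × ℝ → Prop
  | segment {x σ : ℝ} (hx : x ∈ Ioo (-α) α) (hσ : σ ^ 2 = 1) :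
    IsOutwardNormal α β (x, σ * β) (0, σ)
  | arc {θ σ : ℝ} (hθ : θ ∈ Ioo (-(π / 2)) (π / 2)) (hσ : σ ^ 2 = 1) :
    IsOutwardNormal α β (σ * (α + β * cos θ), β * sin θ) (σ * cos θ, sin θ)

namespace IsOutwardNormal

theorem segment_top {x : ℝ} (hx : x ∈ Ioo (-α) α) : IsOutwardNormal α β (x, β) (0, 1) := by
  simpa using segment (β := β) hx (one_pow 2)

theorem segment_bottom {x : ℝ} (hx : x ∈ Ioo (-α) α) : IsOutwardNormal α β (x, -β) (0, -1) := by
  simpa using segment (β := β) (σ := -1) hx (by norm_num)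

theorem arc_right {θ : ℝ} (hθ : θ ∈ Ioo (-(π / 2)) (π / 2)) :
    IsOutwardNormal α β (α + β * cos θ, β * sin θ) (cos θ, sin θ) := by
  simpa using arc (α := α) (β := β) hθ (one_pow 2)

theorem arc_left {θ : ℝ} (hθ : θ ∈ Ioo (-(π / 2)) (π / 2)) :
    IsOutwardNormal α β (-(α + β * cos θ), β * sin θ) (-cos θ, sin θ) := by
  simpa only [neg_one_mul] using arc (α := α) (β := β) (σ := -1) hθ (by norm_num)

theorem fst_sq_add_snd_sq (h : IsOutwardNormal α β p n) : n.1 ^ 2 + n.2 ^ 2 = 1 := by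
  cases h with
  | segment hx hσ => linear_combination hσ
  | @arc θ σ hθ hσ => linear_combination cos θ ^ 2 * hσ + sin_sq_add_cos_sq θ

theorem wingWeight_arc {θ σ : ℝ} (hα : 0 ≤ α) (hβ : 0 ≤ β) (hθ : θ ∈ Ioo (-(π / 2)) (π / 2))
    (hσ : σ ^ 2 = 1) : wingWeight α (σ * (α + β * cos θ)) = β * cos θ := by
  have hcos : 0 ≤ β * cos θ := mul_nonneg hβ (cos_nonneg_of_mem_Icc (Ioo_subset_Icc_self hθ))
  rcases sq_eq_one_iff.1 hσ with rfl | rfl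
  · rw [one_mul, wingWeight_add hα hcos]
  · rw [neg_one_mul, wingWeight_neg, wingWeight_add hα hcos]

theorem mem_stadiumBoundary (hα : 0 ≤ α) (hβ : 0 ≤ β) (h : IsOutwardNormal α β p n) :
    p ∈ StadiumBoundary α β := by
  cases h with
  | @segment x σ hx hσ =>
    exact Or.inl ⟨abs_le.2 ⟨hx.1.le, hx.2.le⟩, sq_eq_sq_iff_eq_or_eq_neg.1 (by
      linear_combination β ^ 2 * hσ)⟩
  | @arc θ σ hθ hσ =>
    rw [mem_stadiumBoundary_iff, wingWeight_arc hα hβ hθ hσ]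
    linear_combination β ^ 2 * sin_sq_add_cos_sq θ

theorem fst_mul_fst_le_wingWeight (hα : 0 ≤ α) (hβ : 0 < β) (h : IsOutwardNormal α β p n) :
    p.1 * n.1 ≤ (α + β) / β * wingWeight α p.1 := by
  cases h with
  | @segment x σ hx hσ =>
    rw [mul_zero]
    exact mul_nonneg (by positivity) (wingWeight_nonneg α x)
  | @arc θ σ hθ hσ =>
    have hcos : 0 ≤ cos θ := cos_nonneg_of_mem_Icc (Ioo_subset_Icc_self hθ)
    calc σ * (α + β * cos θ) * (σ * cos θ) = (α + β * cos θ) * cos θ := by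
          linear_combination (α + β * cos θ) * cos θ * hσ
      _ ≤ (α + β) * cos θ := by
          gcongr
          exact mul_le_of_le_one_right hβ.le (cos_le_one θ)
      _ = (α + β) / β * wingWeight α (σ * (α + β * cos θ)) := by
          rw [wingWeight_arc hα hβ.le hθ hσ]
          field_simp

theorem fst_mul_pdy_eq_snd_mul_pdx {u : ℝ × ℝ → ℝ} (h : IsOutwardNormal α β p n)
    (hα : 0 ≤ α) (hβ : 0 < β) (hu : DifferentiableAt ℝ u p)
    (hu0 : ∀ q ∈ StadiumBoundary α β, u q = 0) : n.1 * pdy u p = n.2 * pdx u p := by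
  cases h with
  | @segment x σ hx hσ =>
    have htan := mul_pdx_add_mul_pdy_eq_zero hu (hasDerivAt_id' x) (hasDerivAt_const x (σ * β))
      (c := 0) (by
        filter_upwards [isOpen_Ioo.mem_nhds hx] with s hs
        exact hu0 _ ((segment hs hσ).mem_stadiumBoundary hα hβ.le))
    linear_combination -σ * htan
  | @arc θ σ hθ hσ =>
    have htan := mul_pdx_add_mul_pdy_eq_zero hu
      ((((hasDerivAt_cos θ).const_mul β).const_add α).const_mul σ)
      ((hasDerivAt_sin θ).const_mul β) (c := 0) (by
        filter_upwards [isOpen_Ioo.mem_nhds hθ] with s hs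
        exact hu0 _ ((arc hs hσ).mem_stadiumBoundary hα hβ.le))
    refine mul_left_cancel₀ hβ.ne' ?_
    linear_combination σ * htan + β * sin θ * pdx u (σ * (α + β * cos θ), β * sin θ) * hσ

theorem pdx_eq_fst_mul_nderiv {u : ℝ × ℝ → ℝ} (h : IsOutwardNormal α β p n)
    (htan : n.1 * pdy u p = n.2 * pdx u p) : pdx u p = n.1 * nderiv u p n := by
  rw [nderiv]
  linear_combination -pdx u p * h.fst_sq_add_snd_sq - n.2 * htan

theorem pdy_eq_snd_mul_nderiv {u : ℝ × ℝ → ℝ} (h : IsOutwardNormal α β p n)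
    (htan : n.1 * pdy u p = n.2 * pdx u p) : pdy u p = n.2 * nderiv u p n := by
  rw [nderiv]
  linear_combination -pdy u p * h.fst_sq_add_snd_sq + n.1 * htan

end IsOutwardNormal

end BoundaryNormals

section BoundaryIntegrals

variable {α β : ℝ} {g h : ℝ × ℝ → ℝ × ℝ → ℝ}

theorem bdryInt_congr (hα : 0 ≤ α) (hgh : ∀ p n, IsOutwardNormal α β p n → g p n = h p n) :
    bdryInt α β g = bdryInt α β h := by
  unfold bdryInt
  congr 1
  · refine intervalIntegral.integral_congr_Ioo_of_le (by linarith) fun x hx => ?_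
    simp only [hgh _ _ (.segment_top hx), hgh _ _ (.segment_bottom hx)]
  · congr 1
    refine intervalIntegral.integral_congr_Ioo_of_le (by linarith [pi_pos]) fun θ hθ => ?_
    simp only [hgh _ _ (.arc_right hθ), hgh _ _ (.arc_left hθ)]

theorem bdryInt_mono (hα : 0 ≤ α) (hβ : 0 ≤ β) (hg : Continuous g.uncurry)
    (hh : Continuous h.uncurry) (hgh : ∀ p n, IsOutwardNormal α β p n → g p n ≤ h p n) :
    bdryInt α β g ≤ bdryInt α β h := by
  refine add_le_add ?_ (mul_le_mul_of_nonneg_left ?_ hβ)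
  · exact intervalIntegral.integral_mono_on_of_le_Ioo (by linarith)
      ((continuous_bdryInt_segments β hg).intervalIntegrable _ _)
      ((continuous_bdryInt_segments β hh).intervalIntegrable _ _)
      fun x hx => add_le_add (hgh _ _ (.segment_top hx)) (hgh _ _ (.segment_bottom hx))
  · exact intervalIntegral.integral_mono_on_of_le_Ioo (by linarith [pi_pos])
      ((continuous_bdryInt_arcs α β hg).intervalIntegrable _ _)
      ((continuous_bdryInt_arcs α β hh).intervalIntegrable _ _)
      fun θ hθ => add_le_add (hgh _ _ (.arc_right hθ)) (hgh _ _ (.arc_left hθ))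

theorem bdryInt_nonneg (hα : 0 ≤ α) (hβ : 0 ≤ β) (hg : ∀ p n, 0 ≤ g p n) :
    0 ≤ bdryInt α β g := by
  refine add_nonneg ?_ (mul_nonneg hβ ?_)
  · exact intervalIntegral.integral_nonneg (by linarith) fun _ _ => add_nonneg (hg _ _) (hg _ _)
  · exact intervalIntegral.integral_nonneg (by linarith [pi_pos]) fun _ _ =>
      add_nonneg (hg _ _) (hg _ _)

theorem bdryInt_const_mul (c : ℝ) (g : ℝ × ℝ → ℝ × ℝ → ℝ) :
    bdryInt α β (fun p n => c * g p n) = c * bdryInt α β g := by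
  simp only [bdryInt, ← mul_add, intervalIntegral.integral_const_mul]
  ring

theorem bdryIntW_weight_mul (hα : 0 ≤ α) (hβ : 0 ≤ β) (g : ℝ × ℝ → ℝ × ℝ → ℝ) :
    bdryIntW α β (fun p n => (|p.1| - α) * g p n) =
      bdryInt α β (fun p n => wingWeight α p.1 * g p n) := by
  have hsegments : ∫ x in (-α)..α, (wingWeight α x * g (x, β) (0, 1) +
      wingWeight α x * g (x, -β) (0, -1)) = 0 := by
    refine (intervalIntegral.integral_congr fun x hx => ?_).trans intervalIntegral.integral_zero
    rw [uIcc_of_le (by linarith), mem_Icc, ← abs_le] at hx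
    simp only [wingWeight_of_abs_le hx, zero_mul, add_zero]
  rw [bdryIntW, bdryInt, hsegments, zero_add]
  congr 1
  refine intervalIntegral.integral_congr fun θ hθ => ?_
  rw [uIcc_of_le (by linarith [pi_pos])] at hθ
  have hcos : 0 ≤ β * cos θ := mul_nonneg hβ (cos_nonneg_of_mem_Icc hθ)
  simp only [wingWeight_neg, wingWeight_add hα hcos, abs_neg, abs_of_nonneg (add_nonneg hα hcos),
    add_sub_cancel_left]

end BoundaryIntegrals

section MultiplierIdentities

variable {α β : ℝ} {u : ℝ × ℝ → ℝ}

theorem pdx_add_pdy_rellich (E : ℝ) (hu : ContDiff ℝ 2 u) (p : ℝ × ℝ) :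
    pdx (fun q => q.1 * (E * u q ^ 2 + pdx u q ^ 2 - pdy u q ^ 2) + u q * pdx u q) p +
      pdy (fun q => 2 * q.1 * (pdx u q * pdy u q) + u q * pdy u q) p =
      2 * pdx u p ^ 2 - (lap u p - E * u p) * (u p + 2 * p.1 * pdx u p) := by
  have hux : ContDiff ℝ 1 (pdx u) := contDiff_pdx hu
  have huy : ContDiff ℝ 1 (pdy u) := contDiff_pdy hu
  have hx {v : ℝ × ℝ → ℝ} (hv : ContDiff ℝ 1 v) := hasDerivAt_pdx (hv.differentiable one_ne_zero p)
  have hy {v : ℝ × ℝ → ℝ} (hv : ContDiff ℝ 1 v) := hasDerivAt_pdy (hv.differentiable one_ne_zero p)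
  have hu1 : ContDiff ℝ 1 u := hu.of_le one_le_two
  have hF := ((hasDerivAt_id' p.1).mul (((((hx hu1).pow 2).const_mul E).add ((hx hux).pow 2)).sub
    ((hx huy).pow 2))).add ((hx hu1).mul (hx hux))
  have hG := (((hy hux).mul (hy huy)).const_mul (2 * p.1)).add ((hy hu1).mul (hy huy))
  have hsymm : pdx (pdy u) p = pdy (pdx u) p := by rw [pdx_pdy_comm hu]
  refine (congrArg₂ (· + ·) hF.deriv hG.deriv).trans ?_
  simp only [lap, hsymm, Pi.add_apply, Pi.sub_apply, Pi.pow_apply]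
  ring

theorem setIntegral_rellich (hα : 0 ≤ α) (hβ : 0 < β) (hu : ContDiff ℝ 2 u)
    (hu0 : ∀ p ∈ StadiumBoundary α β, u p = 0) (E : ℝ) :
    ∫ p in Stadium α β, (2 * pdx u p ^ 2 - (lap u p - E * u p) * (u p + 2 * p.1 * pdx u p)) =
      bdryInt α β (fun p n => p.1 * n.1 * nderiv u p n ^ 2) := by
  have hux : ContDiff ℝ 1 (pdx u) := contDiff_pdx hu
  have huy : ContDiff ℝ 1 (pdy u) := contDiff_pdy hu
  have hu1 : ContDiff ℝ 1 u := hu.of_le one_le_two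
  simp only [← pdx_add_pdy_rellich E hu]
  rw [setIntegral_divergence_stadium hα hβ.le (by fun_prop) (by fun_prop)]
  refine bdryInt_congr hα fun p n h => ?_
  have htan := h.fst_mul_pdy_eq_snd_mul_pdx hα hβ (hu1.differentiable one_ne_zero p) hu0
  simp only [hu0 p (h.mem_stadiumBoundary hα hβ.le), h.pdx_eq_fst_mul_nderiv htan,
    h.pdy_eq_snd_mul_nderiv htan]
  linear_combination p.1 * n.1 * nderiv u p n ^ 2 * h.fst_sq_add_snd_sq

theorem setIntegral_sq_le_setIntegral_pdx_sq (hα : 0 ≤ α) (hβ : 0 ≤ β) (hu : ContDiff ℝ 1 u)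
    (hu0 : ∀ p ∈ StadiumBoundary α β, u p = 0) :
    ∫ p in Stadium α β, u p ^ 2 ≤ 4 * (α + β) ^ 2 * ∫ p in Stadium α β, pdx u p ^ 2 := by
  have hux : Continuous (pdx u) := continuous_pdx hu
  have hpdx (p : ℝ × ℝ) : pdx (fun q => q.1 * u q ^ 2) p = u p ^ 2 + 2 * p.1 * (u p * pdx u p) := by
    have h := (hasDerivAt_id' p.1).mul ((hasDerivAt_pdx (hu.differentiable one_ne_zero p)).pow 2)
    refine h.deriv.trans ?_
    simp only [Pi.pow_apply]
    ring
  have hzero : ∫ p in Stadium α β, (u p ^ 2 + 2 * p.1 * (u p * pdx u p)) = 0 := by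
    simp only [← hpdx]
    rw [setIntegral_pdx_stadium hα hβ (by fun_prop), bdryInt_congr (h := fun _ _ => 0) hα]
    · simp only [bdryInt, add_zero, intervalIntegral.integral_zero, mul_zero]
    · intro p n h
      rw [hu0 p (h.mem_stadiumBoundary hα hβ), zero_pow two_ne_zero, mul_zero, mul_zero]
  have hint {k : ℝ × ℝ → ℝ} (hk : Continuous k) : IntegrableOn k (Stadium α β) :=
    integrableOn_stadium hα hβ hk
  calc ∫ p in Stadium α β, u p ^ 2
      ≤ ∫ p in Stadium α β, (2 * (u p ^ 2 + 2 * p.1 * (u p * pdx u p)) +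
          4 * (α + β) ^ 2 * pdx u p ^ 2) := by
        refine setIntegral_mono_on (hint (by fun_prop)) (hint (by fun_prop))
          (measurableSet_stadium hα hβ) fun p hp => ?_
        have hx := mul_le_mul_of_nonneg_right (fst_sq_le_of_mem_stadium hα hβ hp)
          (sq_nonneg (pdx u p))
        linarith [sq_nonneg (u p + 2 * p.1 * pdx u p)]
    _ = 4 * (α + β) ^ 2 * ∫ p in Stadium α β, pdx u p ^ 2 := by
        rw [integral_add (hint (by fun_prop)) (hint (by fun_prop)), integral_const_mul, hzero,
          integral_const_mul, mul_zero, zero_add]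

end MultiplierIdentities

section Estimates

variable {α β : ℝ} {u : ℝ × ℝ → ℝ}

theorem bdryInt_fst_mul_nderiv_sq_le (hα : 0 ≤ α) (hβ : 0 < β) (hu : ContDiff ℝ 1 u) :
    bdryInt α β (fun p n => p.1 * n.1 * nderiv u p n ^ 2) ≤
      (α + β) / β * bdryInt α β (fun p n => wingWeight α p.1 * nderiv u p n ^ 2) := by
  have hux : Continuous (pdx u) := continuous_pdx hu
  have huy : Continuous (pdy u) := continuous_pdy hu
  have hw := continuous_wingWeight α
  rw [← bdryInt_const_mul]
  refine bdryInt_mono hα hβ.le ?_ ?_ fun p n h => ?_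
  · unfold Function.uncurry nderiv
    fun_prop
  · unfold Function.uncurry nderiv
    fun_prop
  · rw [← mul_assoc]
    exact mul_le_mul_of_nonneg_right (h.fst_mul_fst_le_wingWeight hα hβ) (sq_nonneg _)

theorem mul_add_two_mul_mul_le {L x f a b : ℝ} (hL : 0 < L) (hx : x ^ 2 ≤ L ^ 2) :
    f * (a + 2 * x * b) ≤ b ^ 2 + 3 * L ^ 2 * f ^ 2 + a ^ 2 / (8 * L ^ 2) := by
  have hfa : f * a ≤ 2 * L ^ 2 * f ^ 2 + a ^ 2 / (8 * L ^ 2) := by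
    have hsquare : 2 * L ^ 2 * f ^ 2 + a ^ 2 / (8 * L ^ 2) - f * a =
        2 * (L * f - a / (4 * L)) ^ 2 := by
      field_simp
      ring
    exact sub_nonneg.1 (hsquare ▸ by positivity)
  have hfb : 2 * (x * f) * b ≤ L ^ 2 * f ^ 2 + b ^ 2 :=
    (two_mul_le_add_sq (x * f) b).trans (by
      rw [mul_pow]
      gcongr)
  linarith

theorem setIntegral_pdx_sq_le (hα : 0 ≤ α) (hβ : 0 < β) (hu : ContDiff ℝ 2 u)
    (hu0 : ∀ p ∈ StadiumBoundary α β, u p = 0) (E : ℝ) :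
    ∫ p in Stadium α β, pdx u p ^ 2 ≤
      3 * (α + β) ^ 2 * (∫ p in Stadium α β, (lap u p - E * u p) ^ 2) +
      (∫ p in Stadium α β, u p ^ 2) / (8 * (α + β) ^ 2) +
      (α + β) / β * bdryInt α β (fun p n => wingWeight α p.1 * nderiv u p n ^ 2) := by
  have hu1 : ContDiff ℝ 1 u := hu.of_le one_le_two
  have hux : ContDiff ℝ 1 (pdx u) := contDiff_pdx hu
  have hlap : Continuous (lap u) := continuous_lap hu
  have hint {k : ℝ × ℝ → ℝ} (hk : Continuous k) : IntegrableOn k (Stadium α β) :=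
    integrableOn_stadium hα hβ.le hk
  have hyoung : ∫ p in Stadium α β, (pdx u p ^ 2 -
        (3 * (α + β) ^ 2 * (lap u p - E * u p) ^ 2 + u p ^ 2 / (8 * (α + β) ^ 2))) ≤
      ∫ p in Stadium α β,
        (2 * pdx u p ^ 2 - (lap u p - E * u p) * (u p + 2 * p.1 * pdx u p)) := by
    refine setIntegral_mono_on (hint (by fun_prop)) (hint (by fun_prop))
      (measurableSet_stadium hα hβ.le) fun p hp => ?_
    linarith [mul_add_two_mul_mul_le (f := lap u p - E * u p) (a := u p) (b := pdx u p)
      (by positivity : 0 < α + β) (fst_sq_le_of_mem_stadium hα hβ.le hp)]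
  rw [setIntegral_rellich hα hβ hu hu0, integral_sub (hint (by fun_prop)) (hint (by fun_prop)),
    integral_add (hint (by fun_prop)) (hint (by fun_prop)), integral_const_mul,
    integral_div] at hyoung
  linarith [bdryInt_fst_mul_nderiv_sq_le hα hβ hu1]

theorem setIntegral_sq_le_of_contDiff (hα : 0 ≤ α) (hβ : 0 < β) (hu : ContDiff ℝ 2 u)
    (hu0 : ∀ p ∈ StadiumBoundary α β, u p = 0) (E : ℝ) :
    ∫ p in Stadium α β, u p ^ 2 ≤
      (24 * (α + β) ^ 4 + 8 * (α + β) ^ 3 / β) *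
        ((∫ p in Stadium α β, (lap u p - E * u p) ^ 2) +
          bdryInt α β (fun p n => wingWeight α p.1 * nderiv u p n ^ 2)) := by
  have hpoincare := setIntegral_sq_le_setIntegral_pdx_sq hα hβ.le (hu.of_le one_le_two) hu0
  have hrellich := mul_le_mul_of_nonneg_left (setIntegral_pdx_sq_le hα hβ hu hu0 E)
    (by positivity : 0 ≤ 4 * (α + β) ^ 2)
  have habsorb : 4 * (α + β) ^ 2 * ((∫ p in Stadium α β, u p ^ 2) / (8 * (α + β) ^ 2)) =
      (∫ p in Stadium α β, u p ^ 2) / 2 := by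
    field_simp
    ring
  rw [mul_add, mul_add, habsorb] at hrellich
  have hforcing : 0 ≤ ∫ p in Stadium α β, (lap u p - E * u p) ^ 2 :=
    integral_nonneg fun p => sq_nonneg _
  have hflux : 0 ≤ bdryInt α β (fun p n => wingWeight α p.1 * nderiv u p n ^ 2) :=
    bdryInt_nonneg hα hβ.le fun p n => mul_nonneg (wingWeight_nonneg α p.1) (sq_nonneg _)
  linear_combination 2 * hpoincare + 2 * hrellich +
    mul_nonneg (by positivity : 0 ≤ 8 * (α + β) ^ 3 / β) hforcing +
    mul_nonneg (by positivity : 0 ≤ 24 * (α + β) ^ 4) hflux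

end Estimates

theorem stmt0_general {α β : ℝ} (hα : 0 ≤ α) (hβ : 0 < β) {u : ℝ × ℝ → ℝ} {V : Set (ℝ × ℝ)}
    (hV : IsOpen V) (hSV : Stadium α β ⊆ V) (hu : ContDiffOn ℝ 2 u V)
    (hu0 : ∀ p ∈ StadiumBoundary α β, u p = 0) (E : ℝ) :
    ∫ p in Stadium α β, u p ^ 2 ≤
      (24 * (α + β) ^ 4 + 8 * (α + β) ^ 3 / β) *
        ((∫ p in Stadium α β, (lap u p - E * u p) ^ 2) +
          bdryIntW α β (fun p n => (|p.1| - α) * nderiv u p n ^ 2)) := by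
  obtain ⟨v, hv, huv⟩ := exists_contDiff_eventuallyEq_nhds (n := 2)
    (isCompact_stadium hα hβ.le).isClosed hV hSV hu
  have hS := measurableSet_stadium hα hβ.le
  have hboundary := stadiumBoundary_subset_stadium hα hβ.le
  have hmass : ∫ p in Stadium α β, v p ^ 2 = ∫ p in Stadium α β, u p ^ 2 :=
    setIntegral_congr_fun hS fun p hp => by simp only [(huv p hp).eq_of_nhds]
  have hforcing : ∫ p in Stadium α β, (lap v p - E * v p) ^ 2 =
      ∫ p in Stadium α β, (lap u p - E * u p) ^ 2 :=
    setIntegral_congr_fun hS fun p hp => by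
      simp only [(huv p hp).eq_of_nhds, lap_congr_nhds (huv p hp)]
  have hflux : bdryInt α β (fun p n => wingWeight α p.1 * nderiv v p n ^ 2) =
      bdryIntW α β (fun p n => (|p.1| - α) * nderiv u p n ^ 2) := by
    rw [bdryIntW_weight_mul hα hβ.le]
    refine bdryInt_congr hα fun p n h => ?_
    rw [nderiv_congr_nhds (huv p (hboundary (h.mem_stadiumBoundary hα hβ.le)))]
  rw [← hmass, ← hforcing, ← hflux]
  exact setIntegral_sq_le_of_contDiff hα hβ hv
    (fun p hp => (huv p (hboundary hp)).eq_of_nhds.trans (hu0 p hp)) E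

/-- There is `C > 0` depending only on `α, β` such that every real Dirichlet
quasimode datum with `‖u‖_{L²(S)} = 1` satisfies
`‖f‖²_{L²(S)} + ∫_{∂S ∩ W} w |∂_N u|² dl ≥ C`. -/
theorem stmt0 (α β : ℝ) (hα : 0 < α) (hβ : 0 < β) :
    ∃ C > 0, ∀ d : QMDatum α β,
      (∫ p in Stadium α β, (d.u p) ^ 2) = 1 →
      (∫ p in Stadium α β, (d.f p) ^ 2) +
        bdryIntW α β (fun p n => (|p.1| - α) * (nderiv d.u p n) ^ 2) ≥ C := by
  refine ⟨(24 * (α + β) ^ 4 + 8 * (α + β) ^ 3 / β)⁻¹, by positivity, fun d hd => ?_⟩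
  obtain ⟨V, hV, hSV, hu⟩ := d.smooth
  have hf : ∫ p in Stadium α β, d.f p ^ 2 =
      ∫ p in Stadium α β, (lap d.u p - d.lam ^ 2 * d.u p) ^ 2 :=
    setIntegral_congr_fun (measurableSet_stadium hα.le hβ.le) fun p hp => by
      simp only [d.eqn p hp]
  rw [ge_iff_le, hf, inv_le_iff_one_le_mul₀' (by positivity), ← hd]
  exact stmt0_general hα.le hβ hV hSV (hu.of_le (WithTop.coe_le_coe.2 le_top)) d.dirichlet _
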